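/- (Combined no-arbitrage equivalence.) The interpolant p^h belongs to the shape-constrained class M — i.e. p^h is nonnegative on [0,1]², nondecreasing in T for every fixed k ∈ [0,1], and convex in k for every fixed T ∈ [0,1] — if and only if the coefficient vector ρ belongs to M^h, i.e. ρ_{ij} ≥ 0 for all i,j, ρ_{i+1,j} ≥ ρ_{i,j} for all 0 ≤ i ≤ N−1 and all j, and ρ_{i,j+2} − ρ_{i,j+1} ≥ ρ_{i,j+1} − ρ_{i,j} for all i and all 0 ≤ j ≤ N−2. -/

import Mathlib

/-- The 1D hat function with mesh `h` centered at `c`. -/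
noncomputable def hat (h c t : ℝ) : ℝ := max (1 - |t - c| / h) 0

/-- The finite-dimensional hat-function interpolant `p^h` with mesh `h = 1/N`
and coefficients `ρ`. -/
noncomputable def interp (N : ℕ) (ρ : ℕ → ℕ → ℝ) (T k : ℝ) : ℝ :=
  ∑ i ∈ Finset.range (N + 1), ∑ j ∈ Finset.range (N + 1),
    ρ i j * (hat (1 / N) ((i : ℝ) * (1 / N)) T * hat (1 / N) ((j : ℝ) * (1 / N)) k)

/-!
The interpolant is a tensor product of one-dimensional hat interpolants, so it suffices to show, in
one variable, that nonnegativity, monotonicity and convexity are read off the nodal values. Such a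
function attains its coefficients at the nodes. Conversely, the hat function is a difference
of two shifted ramps and the ramp a difference of two shifted positive parts; summing by parts
once and twice turns the interpolant into a combination of ramps weighted by the first differences
of the coefficients, and of positive parts weighted by their second differences. Increments in `i`
and second differences in `j` commute with interpolation in the other variable, by linearity.
-/

theorem sum_range_mul_sub_succ {R : Type*} [Ring R] (c F : ℕ → R) (n : ℕ) :
    ∑ i ∈ Finset.range (n + 1), c i * (F i - F (i + 1)) =
      c 0 * F 0 + ∑ j ∈ Finset.range n, (c (j + 1) - c j) * F (j + 1) - c n * F (n + 1) := by
  induction n with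
  | zero => simp [mul_sub]
  | succ n ih =>
    rw [Finset.sum_range_succ, ih, Finset.sum_range_succ _ n]
    noncomm_ring

theorem convexOn_mul_add_const {s : Set ℝ} (hs : Convex ℝ s) (a b : ℝ) :
    ConvexOn ℝ s fun x => a * x + b :=
  ((LinearMap.mul ℝ ℝ a).convexOn hs).add_const b

/-- The ramp `y ↦ min(y⁺, 1)`: the primitive step from which hat functions are built by
differencing. -/
noncomputable def ramp (y : ℝ) : ℝ := max 0 (min 1 y)

theorem ramp_of_nonpos {y : ℝ} (hy : y ≤ 0) : ramp y = 0 :=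
  max_eq_left ((min_le_right 1 y).trans hy)

theorem ramp_of_one_le {y : ℝ} (hy : 1 ≤ y) : ramp y = 1 := by
  rw [ramp, min_eq_left hy, max_eq_right zero_le_one]

theorem monotone_ramp : Monotone ramp :=
  monotone_const.max (monotone_const.min monotone_id)

theorem ramp_eq_max_sub_max (y : ℝ) : ramp y = max y 0 - max (y - 1) 0 := by
  grind [ramp]

theorem max_one_sub_abs_eq_ramp_sub_ramp (y : ℝ) :
    max (1 - |y|) 0 = ramp (y + 1) - ramp y := by
  grind [ramp]

theorem hat_nonneg (h c t : ℝ) : 0 ≤ hat h c t := le_max_right _ _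

section Grid

variable {N : ℕ}

theorem hat_grid_eq_max (hN : 0 < N) (i : ℕ) (x : ℝ) :
    hat (1 / N) (i * (1 / N)) x = max (1 - |N * x - i|) 0 := by
  have hpos : (0 : ℝ) < N := Nat.cast_pos.2 hN
  have scaled : N * x - i = (x - i * (1 / N)) / (1 / N) := by field_simp
  rw [hat, scaled, abs_div, abs_of_pos (one_div_pos.2 hpos)]

theorem hat_grid_node (hN : 0 < N) (i j : ℕ) :
    hat (1 / N) (j * (1 / N)) (i / N) = if j = i then 1 else 0 := by
  rw [hat_grid_eq_max hN, mul_div_cancel₀ _ (Nat.cast_ne_zero.2 hN.ne')]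
  split_ifs with h
  · simp [h]
  · have : (1 : ℝ) ≤ |(i : ℝ) - j| := by
      exact_mod_cast Int.one_le_abs (sub_ne_zero.2 (Nat.cast_injective.ne (Ne.symm h)))
    exact max_eq_right (by linarith)

theorem natCast_div_mem_Icc {i : ℕ} (hi : i ≤ N) : (i : ℝ) / N ∈ Set.Icc (0 : ℝ) 1 :=
  ⟨by positivity, div_le_one_of_le₀ (Nat.cast_le.2 hi) N.cast_nonneg⟩

end Grid

/-- The one-dimensional hat interpolant of mesh `1 / N` with nodal values `c 0, …, c N`, the
building block of the tensor product `interp`; the values of `c` beyond `N` are ignored. -/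
noncomputable def hatInterp (N : ℕ) (c : ℕ → ℝ) (x : ℝ) : ℝ :=
  ∑ i ∈ Finset.range (N + 1), c i * hat (1 / N) (i * (1 / N)) x

theorem hatInterp_sub (N : ℕ) (c d : ℕ → ℝ) (x : ℝ) :
    hatInterp N (fun i => c i - d i) x = hatInterp N c x - hatInterp N d x := by
  simp only [hatInterp, sub_mul, Finset.sum_sub_distrib]

section HatInterp

variable {N : ℕ} {c d : ℕ → ℝ} {x : ℝ}

theorem hatInterp_node (hN : 0 < N) (c : ℕ → ℝ) {i : ℕ} (hi : i ≤ N) :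
    hatInterp N c (i / N) = c i := by
  simp only [hatInterp, hat_grid_node hN, mul_ite, mul_one, mul_zero, Finset.sum_ite_eq',
    Finset.mem_range_succ_iff, hi, if_true]

theorem hatInterp_eq_sum_ramp (hN : 0 < N) (c : ℕ → ℝ) (hx : x ∈ Set.Icc (0 : ℝ) 1) :
    hatInterp N c x = c 0 + ∑ j ∈ Finset.range N, (c (j + 1) - c j) * ramp (N * x - j) := by
  have first : ramp (N * x + 1) = 1 :=
    ramp_of_one_le (le_add_of_nonneg_left (mul_nonneg N.cast_nonneg hx.1))
  have last : ramp (N * x - N) = 0 :=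
    ramp_of_nonpos (sub_nonpos.2 (mul_le_of_le_one_right N.cast_nonneg hx.2))
  have parts := sum_range_mul_sub_succ c (fun i => ramp (N * x - i + 1)) N
  simp only [Nat.cast_add_one, Nat.cast_zero, sub_zero, ← sub_sub, sub_add_cancel, first, last,
    mul_one, mul_zero] at parts
  simpa only [hatInterp, hat_grid_eq_max hN, max_one_sub_abs_eq_ramp_sub_ramp] using parts

theorem hatInterp_succ_eq_sum_max (n : ℕ) (c : ℕ → ℝ) (hx : x ∈ Set.Icc (0 : ℝ) 1) :
    hatInterp (n + 1) c x =
      c 0 + (c 1 - c 0) * ((n + 1) * x) +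
        ∑ j ∈ Finset.range n,
          (c (j + 2) - c (j + 1) - (c (j + 1) - c j)) * max ((n + 1) * x - (j + 1)) 0 := by
  have first : max ((n + 1) * x) 0 = (n + 1) * x :=
    max_eq_left (mul_nonneg n.cast_add_one_pos.le hx.1)
  have last : max ((n + 1) * x - (n + 1)) 0 = 0 :=
    max_eq_right (sub_nonpos.2 (mul_le_of_le_one_right n.cast_add_one_pos.le hx.2))
  have parts := sum_range_mul_sub_succ (fun j => c (j + 1) - c j)
    (fun j => max ((n + 1) * x - j) 0) n
  simp only [Nat.cast_add_one, Nat.cast_zero, sub_zero, zero_add, first, last, mul_zero] at parts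
  rw [hatInterp_eq_sum_ramp n.add_one_pos c hx, add_assoc]
  simpa only [add_right_inj, ramp_eq_max_sub_max, Nat.cast_add_one, sub_sub] using parts

theorem hatInterp_nonneg_iff (hN : 0 < N) :
    (∀ x ∈ Set.Icc (0 : ℝ) 1, 0 ≤ hatInterp N c x) ↔ ∀ i ≤ N, 0 ≤ c i := by
  constructor
  · intro h i hi
    simpa only [hatInterp_node hN c hi] using h _ (natCast_div_mem_Icc hi)
  · intro hc x _
    exact Finset.sum_nonneg fun i hi =>
      mul_nonneg (hc i (Finset.mem_range_succ_iff.1 hi)) (hat_nonneg _ _ _)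

theorem hatInterp_le_hatInterp_iff (hN : 0 < N) :
    (∀ x ∈ Set.Icc (0 : ℝ) 1, hatInterp N c x ≤ hatInterp N d x) ↔ ∀ i ≤ N, c i ≤ d i := by
  simpa only [hatInterp_sub, sub_nonneg] using hatInterp_nonneg_iff (c := fun i => d i - c i) hN

theorem monotoneOn_hatInterp_iff (hN : 0 < N) :
    MonotoneOn (hatInterp N c) (Set.Icc 0 1) ↔ ∀ i, i + 1 ≤ N → c i ≤ c (i + 1) := by
  constructor
  · intro h i hi
    have hi' : i ≤ N := Nat.le_of_succ_le hi
    rw [← hatInterp_node hN c hi', ← hatInterp_node hN c hi]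
    exact h (natCast_div_mem_Icc hi') (natCast_div_mem_Icc hi) (by gcongr; exact i.le_succ)
  · intro hc x hx y hy hxy
    rw [hatInterp_eq_sum_ramp hN c hx, hatInterp_eq_sum_ramp hN c hy]
    gcongr with j hj
    · exact sub_nonneg.2 (hc j (Finset.mem_range.1 hj))
    · exact monotone_ramp (by gcongr)

theorem convexOn_hatInterp (hN : 0 < N)
    (hc : ∀ j, j + 2 ≤ N → c (j + 1) - c j ≤ c (j + 2) - c (j + 1)) :
    ConvexOn ℝ (Set.Icc 0 1) (hatInterp N c) := by
  obtain ⟨n, rfl⟩ : ∃ n, N = n + 1 := Nat.exists_eq_add_one.2 hN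
  have hI : Convex ℝ (Set.Icc (0 : ℝ) 1) := convex_Icc 0 1
  have affine : ConvexOn ℝ (Set.Icc 0 1) fun x : ℝ => c 0 + (c 1 - c 0) * ((n + 1) * x) :=
    (convexOn_mul_add_const hI ((c 1 - c 0) * (n + 1)) (c 0)).congr fun x _ => by ring
  have kink (j : ℕ) : ConvexOn ℝ (Set.Icc 0 1) fun x : ℝ => max ((n + 1) * x - (j + 1)) 0 :=
    (convexOn_mul_add_const hI (n + 1) (-(j + 1))).sup (convexOn_const 0 hI)
  have kinks : ConvexOn ℝ (Set.Icc 0 1) (∑ j ∈ Finset.range n, fun x : ℝ =>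
      (c (j + 2) - c (j + 1) - (c (j + 1) - c j)) * max ((n + 1) * x - (j + 1)) 0) :=
    Finset.sum_induction _ (ConvexOn ℝ (Set.Icc 0 1)) (fun _ _ => ConvexOn.add)
      (convexOn_const 0 hI) fun j hj =>
        (kink j).smul (sub_nonneg.2 (hc j (Nat.succ_le_succ (Finset.mem_range.1 hj))))
  refine (affine.add kinks).congr fun x hx => ?_
  simp only [Pi.add_apply, Finset.sum_apply, hatInterp_succ_eq_sum_max n c hx]

theorem convexOn_hatInterp_iff (hN : 0 < N) :
    ConvexOn ℝ (Set.Icc 0 1) (hatInterp N c) ↔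
      ∀ j, j + 2 ≤ N → c (j + 1) - c j ≤ c (j + 2) - c (j + 1) := by
  refine ⟨fun h j hj => ?_, convexOn_hatInterp hN⟩
  have hj₁ : j + 1 ≤ N := Nat.le_of_succ_le hj
  have hj₀ : j ≤ N := Nat.le_of_succ_le hj₁
  have midpoint : (1 / 2 : ℝ) • ((j : ℝ) / N) + (1 / 2 : ℝ) • (((j + 2 : ℕ) : ℝ) / N) =
      ((j + 1 : ℕ) : ℝ) / N := by
    simp only [smul_eq_mul]
    push_cast
    ring
  have jensen := h.2 (natCast_div_mem_Icc hj₀) (natCast_div_mem_Icc hj)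
    one_half_pos.le one_half_pos.le (add_halves 1)
  rw [midpoint, hatInterp_node hN c hj₁, hatInterp_node hN c hj₀, hatInterp_node hN c hj] at jensen
  simp only [smul_eq_mul] at jensen
  linarith

end HatInterp

theorem interp_eq_hatInterp_left (N : ℕ) (ρ : ℕ → ℕ → ℝ) (T k : ℝ) :
    interp N ρ T k = hatInterp N (fun i => hatInterp N (ρ i) k) T := by
  simp only [interp, hatInterp, Finset.sum_mul]
  exact Finset.sum_congr rfl fun i _ => Finset.sum_congr rfl fun j _ => by ring

theorem interp_eq_hatInterp_right (N : ℕ) (ρ : ℕ → ℕ → ℝ) (T k : ℝ) :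
    interp N ρ T k = hatInterp N (fun j => hatInterp N (fun i => ρ i j) T) k := by
  simp only [interp, hatInterp, Finset.sum_mul]
  rw [Finset.sum_comm]
  exact Finset.sum_congr rfl fun j _ => Finset.sum_congr rfl fun i _ => by ring

section Interp

variable {N : ℕ} {ρ : ℕ → ℕ → ℝ}

theorem interp_nonneg_iff (hN : 0 < N) :
    (∀ T ∈ Set.Icc (0 : ℝ) 1, ∀ k ∈ Set.Icc (0 : ℝ) 1, 0 ≤ interp N ρ T k) ↔
      ∀ i ≤ N, ∀ j ≤ N, 0 ≤ ρ i j := by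
  simp only [interp_eq_hatInterp_right, hatInterp_nonneg_iff hN]
  rw [forall₂_comm]
  simp only [hatInterp_nonneg_iff hN]
  exact forall₂_comm

theorem monotoneOn_interp_iff (hN : 0 < N) :
    (∀ k ∈ Set.Icc (0 : ℝ) 1, MonotoneOn (fun T => interp N ρ T k) (Set.Icc 0 1)) ↔
      ∀ i, i + 1 ≤ N → ∀ j ≤ N, ρ i j ≤ ρ (i + 1) j := by
  simp only [interp_eq_hatInterp_left, monotoneOn_hatInterp_iff hN]
  rw [forall₂_comm]
  simp only [hatInterp_le_hatInterp_iff hN]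

theorem convexOn_interp_iff (hN : 0 < N) :
    (∀ T ∈ Set.Icc (0 : ℝ) 1, ConvexOn ℝ (Set.Icc 0 1) (fun k => interp N ρ T k)) ↔
      ∀ i ≤ N, ∀ j, j + 2 ≤ N → ρ i (j + 1) - ρ i j ≤ ρ i (j + 2) - ρ i (j + 1) := by
  simp only [interp_eq_hatInterp_right, convexOn_hatInterp_iff hN]
  rw [forall₂_comm]
  simp only [← hatInterp_sub, hatInterp_le_hatInterp_iff hN]
  exact forall₂_comm

end Interp

/-- combined no-arbitrage equivalence: `p^h` is nonnegative on `[0,1]²`,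
nondecreasing in `T` for every fixed `k ∈ [0,1]`, and convex in `k` for every fixed
`T ∈ [0,1]`, iff the coefficient vector `ρ` satisfies `ρ_{ij} ≥ 0` for all `i,j`,
`ρ_{i+1,j} ≥ ρ_{i,j}` for all `0 ≤ i ≤ N−1` and all `j`, and
`ρ_{i,j+2} − ρ_{i,j+1} ≥ ρ_{i,j+1} − ρ_{i,j}` for all `i` and all `0 ≤ j ≤ N−2`. -/
theorem interp_shape_constraints_iff (N : ℕ) (hN : 1 ≤ N) (ρ : ℕ → ℕ → ℝ) :
    ((∀ T ∈ Set.Icc (0 : ℝ) 1, ∀ k ∈ Set.Icc (0 : ℝ) 1, 0 ≤ interp N ρ T k) ∧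
     (∀ k ∈ Set.Icc (0 : ℝ) 1, MonotoneOn (fun T => interp N ρ T k) (Set.Icc (0 : ℝ) 1)) ∧
     (∀ T ∈ Set.Icc (0 : ℝ) 1, ConvexOn ℝ (Set.Icc (0 : ℝ) 1) (fun k => interp N ρ T k))) ↔
      ((∀ i j : ℕ, i ≤ N → j ≤ N → 0 ≤ ρ i j) ∧
       (∀ i j : ℕ, i + 1 ≤ N → j ≤ N → ρ i j ≤ ρ (i + 1) j) ∧
       (∀ i j : ℕ, i ≤ N → j + 2 ≤ N →
         ρ i (j + 1) - ρ i j ≤ ρ i (j + 2) - ρ i (j + 1))) := by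
  rw [interp_nonneg_iff hN, monotoneOn_interp_iff hN, convexOn_interp_iff hN]
  refine and_congr ?_ (and_congr ?_ ?_) <;> exact forall_congr' fun i => forall_comm
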